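/- Let (f̄,A) be an essentially unbounded random GL(2,ℝ)-valued cocycle. Then there is a random cocycle (f̄,B) cohomologous to (f̄,A) such that every (f̄,B)-invariant probability measure μ̂ on X × ℙ(ℝ²) is a product measure μ̂ = μ × ν, where ν is a probability measure on ℙ(ℝ²). -/

import Mathlib

open MeasureTheory Filter
open scoped ENNReal

/-- Matrices are measurable as functions of their entries. -/
instance matrixMeasurableSpace {m n α : Type*} [MeasurableSpace α] :
    MeasurableSpace (Matrix m n α) :=
  show MeasurableSpace (m → n → α) from inferInstance

/-- The shift map on two-sided sequences. -/
def shift {Y : Type*} (ω : ℤ → Y) : ℤ → Y := fun n => ω (n + 1)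

/-- The skew-shift `f̄(ω,x) = (θω, f_{ω₀}(x))` of a random transformation. -/
def fbar {Y X : Type*} (f : Y → X → X) : (ℤ → Y) × X → (ℤ → Y) × X :=
  fun q => (shift q.1, f (q.1 0) q.2)

/-- The locally constant map `Ā(ω,x) = A_{ω₀}(x)` defining a random cocycle. -/
def Abar {Y X G : Type*} (A : Y → X → G) : (ℤ → Y) × X → G := fun q => A (q.1 0) q.2

/-- Iterates of a cocycle: `cocycleIter T A n z = A(T^{n-1} z) ⋯ A(T z) A(z)`. -/
def cocycleIter {Z G : Type*} [Monoid G] (T : Z → Z) (A : Z → G) : ℕ → Z → G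
  | 0, _ => 1
  | n + 1, z => cocycleIter T A n (T z) * A z

/-- `Pr` is the two-sided Bernoulli product measure `p^ℤ` on `ℤ → Y`: the measure of
every cylinder is the corresponding product of `p`-measures. -/
def IsBernoulli {Y : Type*} [MeasurableSpace Y] (p : Measure Y)
    (Pr : Measure (ℤ → Y)) : Prop :=
  ∀ (s : Finset ℤ) (t : ℤ → Set Y), (∀ i ∈ s, MeasurableSet (t i)) →
    Pr {ω | ∀ i ∈ s, ω i ∈ t i} = ∏ i ∈ s, p (t i)

/-- Lower asymptotic density of a set of natural numbers. -/
noncomputable def lowerDensity (D : Set ℕ) : ℝ :=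
  Filter.liminf (fun n : ℕ => ((D ∩ Set.Iic n).ncard : ℝ) / n) Filter.atTop

/-- A sequence of reals converges essentially to infinity: for every `K > 0` the set
of times at which the sequence is `≤ K` has lower asymptotic density zero. -/
def ConvergesEssentiallyToInfinity (u : ℕ → ℝ) : Prop :=
  ∀ K > (0 : ℝ), lowerDensity {n | u n ≤ K} = 0

/-- The operator norm of a real `d × d` matrix acting on Euclidean space. -/
noncomputable def opNorm {d : ℕ} (M : Matrix (Fin d) (Fin d) ℝ) : ℝ :=
  ‖LinearMap.toContinuousLinearMap (Matrix.toEuclideanLin M)‖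

/-- The projective space of `ℝ^d`. -/
abbrev Proj (d : ℕ) := Projectivization ℝ (Fin d → ℝ)

noncomputable instance (d : ℕ) : MeasurableSpace (Proj d) :=
  show MeasurableSpace (Quotient _) from inferInstance

lemma glInjective {d : ℕ} (A : GL (Fin d) ℝ) :
    Function.Injective (Matrix.toLin' (A : Matrix (Fin d) (Fin d) ℝ)) := by
  have h : Function.LeftInverse
      (Matrix.toLin' (((A⁻¹ : GL (Fin d) ℝ)) : Matrix (Fin d) (Fin d) ℝ))
      (Matrix.toLin' ((A : Matrix (Fin d) (Fin d) ℝ))) := by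
    intro v
    rw [← Matrix.toLin'_mul_apply]
    have h1 : ((A⁻¹ : GL (Fin d) ℝ) : Matrix (Fin d) (Fin d) ℝ) *
        (A : Matrix (Fin d) (Fin d) ℝ) = 1 := by
      exact_mod_cast A.inv_mul
    rw [h1]
    simp
  exact h.injective

/-- The projective action of an invertible matrix on `ℙ(ℝ^d)`. -/
noncomputable def projAction {d : ℕ} (A : GL (Fin d) ℝ) : Proj d → Proj d :=
  Projectivization.map (Matrix.toLin' (A : Matrix (Fin d) (Fin d) ℝ)) (glInjective A)

open Topology ProbabilityTheory

/-- The quotient topology on the projective space of `ℝ^d`. -/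
noncomputable instance projTopologicalSpace (d : ℕ) : TopologicalSpace (Proj d) :=
  show TopologicalSpace (Quotient _) from inferInstance

lemma continuous_projMk (d : ℕ) :
    Continuous (Projectivization.mk' ℝ : {v : Fin d → ℝ // v ≠ 0} → Proj d) :=
  continuous_quotient_mk'

lemma measurable_projMk (d : ℕ) :
    Measurable (Projectivization.mk' ℝ : {v : Fin d → ℝ // v ≠ 0} → Proj d) :=
  measurable_quotient_mk''

lemma surjective_projMk (d : ℕ) :
    Function.Surjective (Projectivization.mk' ℝ : {v : Fin d → ℝ // v ≠ 0} → Proj d) :=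
  Quotient.mk''_surjective

/-- A line is sent to the matrix of the orthogonal projection onto it. -/
noncomputable def projEmbed (d : ℕ) : Proj d → Fin d → Fin d → ℝ :=
  Projectivization.lift (fun v i j => v.1 i * v.1 j / (v.1 ⬝ᵥ v.1)) (by
    rintro ⟨a, ha⟩ ⟨b, hb⟩ t h
    simp only at h
    subst h
    have ht : t ≠ 0 := by rintro rfl; simp at ha
    have hb' : b ⬝ᵥ b ≠ 0 := by simpa using hb
    ext i j
    simp only [Pi.smul_apply, smul_eq_mul, dotProduct_smul, smul_dotProduct]
    field_simp)

lemma continuous_projEmbed (d : ℕ) : Continuous (projEmbed d) := by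
  refine Continuous.quotient_lift ?_ _
  refine continuous_pi fun i => continuous_pi fun j => ?_
  have hc : ∀ k, Continuous fun v : {v : Fin d → ℝ // v ≠ 0} => v.1 k := fun k =>
    (continuous_apply k).comp continuous_subtype_val
  refine Continuous.div ((hc i).mul (hc j)) ?_ ?_
  · exact continuous_finsetSum _ fun k _ => (hc k).mul (hc k)
  rintro ⟨v, hv⟩
  simpa using hv

lemma injective_projEmbed (d : ℕ) : Function.Injective (projEmbed d) := by
  intro p q h
  induction p using Projectivization.ind with | h v hv => ?_
  induction q using Projectivization.ind with | h w hw => ?_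
  have hv' : v ⬝ᵥ v ≠ 0 := by simpa using hv
  have hw' : w ⬝ᵥ w ≠ 0 := by simpa using hw
  have h1 : ∀ i j, v i * v j / (v ⬝ᵥ v) = w i * w j / (w ⬝ᵥ w) := fun i j =>
    congrFun (congrFun h i) j
  obtain ⟨j, hj⟩ : ∃ j, v j ≠ 0 := by
    by_contra! hc
    exact hv (funext hc)
  rw [Projectivization.mk_eq_mk_iff']
  refine ⟨w j * (v ⬝ᵥ v) / (v j * (w ⬝ᵥ w)), ?_⟩
  ext i
  have := h1 i j
  simp only [Pi.smul_apply, smul_eq_mul]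
  field_simp at this ⊢
  linarith

instance projT2Space (d : ℕ) : T2Space (Proj d) :=
  T2Space.of_injective_continuous (injective_projEmbed d) (continuous_projEmbed d)

instance projCompactSpace (d : ℕ) : CompactSpace (Proj d) := by
  have hne : ∀ v : Metric.sphere (0 : Fin d → ℝ) 1, (v : Fin d → ℝ) ≠ 0 := fun v =>
    ne_zero_of_mem_unit_sphere v
  let s : Metric.sphere (0 : Fin d → ℝ) 1 → Proj d := fun v =>
    Projectivization.mk' ℝ ⟨v, hne v⟩
  have hs : Continuous s :=
    (continuous_projMk d).comp (Continuous.subtype_mk continuous_subtype_val _)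
  refine ⟨?_⟩
  have : Set.range s = Set.univ := by
    refine Set.eq_univ_of_forall fun p => ?_
    induction p using Projectivization.ind with | h v hv => ?_
    refine ⟨⟨‖v‖⁻¹ • v, by simp [norm_smul, hv]⟩, ?_⟩
    simp only [s, Projectivization.mk'_eq_mk]
    rw [Projectivization.mk_eq_mk_iff']
    exact ⟨‖v‖⁻¹, rfl⟩
  rw [← this]
  exact isCompact_range hs

instance projPolishSpace (d : ℕ) : PolishSpace (Proj d) :=
  ((continuous_projEmbed d).isClosedEmbedding (injective_projEmbed d)).polishSpace

instance projBorelSpace (d : ℕ) : BorelSpace (Proj d) := by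
  have : PolishSpace {v : Fin d → ℝ // v ≠ 0} :=
    (isOpen_ne (x := (0 : Fin d → ℝ))).polishSpace
  exact ⟨(continuous_projMk d).map_eq_borel (surjective_projMk d)⟩

lemma gl_mulVec_ne_zero {d : ℕ} (g : GL (Fin d) ℝ) {v : Fin d → ℝ} (hv : v ≠ 0) :
    (g : Matrix (Fin d) (Fin d) ℝ).mulVec v ≠ 0 := fun h =>
  hv (glInjective g (by simpa [Matrix.toLin'_apply] using h))

lemma projAction_mk {d : ℕ} (g : GL (Fin d) ℝ) {v : Fin d → ℝ} (hv : v ≠ 0) :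
    projAction g (Projectivization.mk ℝ v hv) =
      Projectivization.mk ℝ ((g : Matrix (Fin d) (Fin d) ℝ).mulVec v) (gl_mulVec_ne_zero g hv) :=
  rfl

lemma projAction_mul {d : ℕ} (g h : GL (Fin d) ℝ) (p : Proj d) :
    projAction (g * h) p = projAction g (projAction h p) := by
  induction p using Projectivization.ind with | h v hv => ?_
  simp [projAction_mk, Matrix.mulVec_mulVec]

@[simp]
lemma projAction_one {d : ℕ} (p : Proj d) : projAction (1 : GL (Fin d) ℝ) p = p := by
  induction p using Projectivization.ind with | h v hv => ?_
  simp [projAction_mk]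

/-- `Projectivization.mk` is continuous, in terms of convergence of vectors. -/
lemma tendsto_projMk {ι : Type*} {l : Filter ι} {d : ℕ} {u : ι → Fin d → ℝ}
    (hu : ∀ n, u n ≠ 0) {v : Fin d → ℝ} (hv : v ≠ 0) (h : Tendsto u l (𝓝 v)) :
    Tendsto (fun n => Projectivization.mk ℝ (u n) (hu n)) l (𝓝 (Projectivization.mk ℝ v hv)) :=
  ((continuous_projMk d).tendsto ⟨v, hv⟩).comp
    (f := fun n => (⟨u n, hu n⟩ : {v : Fin d → ℝ // v ≠ 0})) (tendsto_subtype_rng.2 h)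

lemma continuous_projAction_right {d : ℕ} (g : GL (Fin d) ℝ) : Continuous (projAction g) := by
  have : Continuous fun v : {v : Fin d → ℝ // v ≠ 0} => projAction g (Projectivization.mk' ℝ v) := by
    refine (continuous_projMk d).comp (f := fun v : {v : Fin d → ℝ // v ≠ 0} =>
      (⟨(g : Matrix (Fin d) (Fin d) ℝ).mulVec v.1, gl_mulVec_ne_zero g v.2⟩ :
        {v : Fin d → ℝ // v ≠ 0})) ?_
    exact Continuous.subtype_mk (by fun_prop) _
  exact Continuous.quotient_lift this _

lemma continuous_projAction_left {d : ℕ} (p : Proj d) :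
    Continuous fun g : GL (Fin d) ℝ => projAction g p := by
  induction p using Projectivization.ind with | h v hv => ?_
  refine (continuous_projMk d).comp (f := fun g : GL (Fin d) ℝ =>
      (⟨(g : Matrix (Fin d) (Fin d) ℝ).mulVec v, gl_mulVec_ne_zero g hv⟩ :
        {v : Fin d → ℝ // v ≠ 0})) ?_
  have : Continuous fun g : GL (Fin d) ℝ => (g : Matrix (Fin d) (Fin d) ℝ) :=
    Units.continuous_val
  exact Continuous.subtype_mk (by fun_prop) _

lemma measurable_projAction {X : Type*} [MeasurableSpace X] {d : ℕ} {P : X → GL (Fin d) ℝ}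
    (hP : Measurable fun x => (P x : Matrix (Fin d) (Fin d) ℝ)) :
    Measurable fun q : X × Proj d => projAction (P q.1) q.2 := by
  have hm : ∀ p : Proj d, Measurable fun x => projAction (P x) p := fun p => by
    induction p using Projectivization.ind with | h v hv => ?_
    refine (measurable_projMk d).comp (f := fun x =>
      (⟨(P x : Matrix (Fin d) (Fin d) ℝ).mulVec v, gl_mulVec_ne_zero (P x) hv⟩ :
        {v : Fin d → ℝ // v ≠ 0})) (Measurable.subtype_mk ?_)
    refine measurable_pi_lambda _ fun i => ?_
    simp only [Matrix.mulVec, dotProduct]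
    refine Finset.measurable_sum _ fun j _ => Measurable.mul_const ?_ _
    exact (measurable_pi_apply j).comp ((measurable_pi_apply i).comp hP)
  have : Measurable (Function.uncurry fun (p : Proj d) (x : X) => projAction (P x) p) :=
    measurable_uncurry_of_continuous_of_measurable
      (fun x => continuous_projAction_right (P x)) hm
  exact this.comp measurable_swap

lemma measurable_gl_inv {X : Type*} [MeasurableSpace X] {P : X → GL (Fin 2) ℝ}
    (hP : Measurable fun x => (P x : Matrix (Fin 2) (Fin 2) ℝ)) :
    Measurable fun x => (((P x)⁻¹ : GL (Fin 2) ℝ) : Matrix (Fin 2) (Fin 2) ℝ) := by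
  have he : ∀ i j, Measurable fun x => (P x : Matrix (Fin 2) (Fin 2) ℝ) i j := fun i j =>
    (measurable_pi_apply j).comp ((measurable_pi_apply i).comp hP)
  refine measurable_pi_lambda _ fun i => measurable_pi_lambda _ fun j => ?_
  simp only [Matrix.coe_units_inv, Matrix.inv_def, Matrix.adjugate_fin_two, Matrix.det_fin_two,
    Ring.inverse_eq_inv', Matrix.smul_apply, smul_eq_mul]
  refine Measurable.mul ?_ ?_
  · have := he 0 0; have := he 0 1; have := he 1 0; have := he 1 1
    fun_prop
  · fin_cases i <;> fin_cases j <;> simp [he]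

lemma measurable_gl_mul {X : Type*} [MeasurableSpace X] {d : ℕ} {P Q : X → GL (Fin d) ℝ}
    (hP : Measurable fun x => (P x : Matrix (Fin d) (Fin d) ℝ))
    (hQ : Measurable fun x => (Q x : Matrix (Fin d) (Fin d) ℝ)) :
    Measurable fun x => ((P x * Q x : GL (Fin d) ℝ) : Matrix (Fin d) (Fin d) ℝ) := by
  refine measurable_pi_lambda _ fun i => measurable_pi_lambda _ fun j => ?_
  simp only [Units.val_mul, Matrix.mul_apply]
  refine Finset.measurable_sum _ fun k _ => Measurable.mul ?_ ?_
  · exact (measurable_pi_apply k).comp ((measurable_pi_apply i).comp hP)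
  · exact (measurable_pi_apply j).comp ((measurable_pi_apply k).comp hQ)

/-- Two nonzero planar vectors with vanishing determinant span the same line. -/
lemma projMk_eq_of_det_eq_zero {v w : Fin 2 → ℝ} (hv : v ≠ 0) (hw : w ≠ 0)
    (h : v 0 * w 1 - v 1 * w 0 = 0) :
    Projectivization.mk ℝ v hv = Projectivization.mk ℝ w hw := by
  rw [Projectivization.mk_eq_mk_iff']
  by_cases h0 : w 0 = 0
  · have h1 : w 1 ≠ 0 := fun h1 => hw (by ext i; fin_cases i <;> simpa)
    refine ⟨v 1 / w 1, ?_⟩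
    have : v 0 = 0 := by simpa [h0, h1] using h
    ext i
    fin_cases i
    · simp [h0, this]
    · simp [h1]
  · refine ⟨v 0 / w 0, ?_⟩
    ext i
    fin_cases i
    · simp [h0]
    · simp; field_simp; linarith

lemma exists_gl_basis {a b : Proj 2} (hab : a ≠ b) :
    ∃ g : GL (Fin 2) ℝ,
      projAction g (Projectivization.mk ℝ ![1, 0] (by simp)) = a ∧
      projAction g (Projectivization.mk ℝ ![0, 1] (by simp)) = b := by
  induction a using Projectivization.ind with | h v hv => ?_
  induction b using Projectivization.ind with | h w hw => ?_
  have hdet : (!![v 0, w 0; v 1, w 1] : Matrix (Fin 2) (Fin 2) ℝ).det ≠ 0 := by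
    rw [Matrix.det_fin_two_of]
    intro h
    exact hab (projMk_eq_of_det_eq_zero hv hw (by linarith))
  refine ⟨Matrix.GeneralLinearGroup.mkOfDetNeZero _ hdet, ?_, ?_⟩
  · rw [projAction_mk]
    congr 1
    ext i
    fin_cases i <;> simp [Matrix.GeneralLinearGroup.mkOfDetNeZero, Matrix.mulVec, dotProduct]
  · rw [projAction_mk]
    congr 1
    ext i
    fin_cases i <;> simp [Matrix.GeneralLinearGroup.mkOfDetNeZero, Matrix.mulVec, dotProduct]

lemma projAction_inv_of_eq {d : ℕ} {g : GL (Fin d) ℝ} {a b : Proj d} (h : projAction g a = b) :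
    projAction g⁻¹ b = a := by
  rw [← h, ← projAction_mul, inv_mul_cancel, projAction_one]

/-- `GL(2,ℝ)` acts two-transitively on the projective line. -/
lemma exists_gl_two_transitive {a b c d : Proj 2} (hab : a ≠ b) (hcd : c ≠ d) :
    ∃ g : GL (Fin 2) ℝ, projAction g a = c ∧ projAction g b = d := by
  obtain ⟨g, hg0, hg1⟩ := exists_gl_basis hab
  obtain ⟨h, hh0, hh1⟩ := exists_gl_basis hcd
  refine ⟨h * g⁻¹, ?_, ?_⟩
  · rw [projAction_mul, projAction_inv_of_eq hg0, hh0]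
  · rw [projAction_mul, projAction_inv_of_eq hg1, hh1]

instance projLineNontrivial : Nontrivial (Proj 2) := by
  refine ⟨Projectivization.mk ℝ ![1, 0] (by simp), Projectivization.mk ℝ ![0, 1] (by simp), ?_⟩
  rw [Ne, Projectivization.mk_eq_mk_iff']
  rintro ⟨a, ha⟩
  simpa using congrFun ha 0

lemma exists_gl_transitive (a c : Proj 2) : ∃ g : GL (Fin 2) ℝ, projAction g a = c := by
  obtain ⟨b, hb⟩ := exists_ne a
  obtain ⟨d, hd⟩ := exists_ne c
  obtain ⟨g, hg, -⟩ := exists_gl_two_transitive hb.symm hd.symm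
  exact ⟨g, hg⟩

/-- A sequence of matrices of `GL(2,ℝ)` has a subsequence converging pointwise on the projective
line either to an invertible projective map or to a map taking at most two values. -/
lemma exists_subseq_tendsto_projAction (g : ℕ → GL (Fin 2) ℝ) :
    ∃ (s : ℕ → ℕ) (F : Proj 2 → Proj 2), StrictMono s ∧
      (∀ y, Tendsto (fun n => projAction (g (s n)) y) atTop (𝓝 (F y))) ∧ Measurable F ∧
      ((∃ h : GL (Fin 2) ℝ, F = projAction h) ∨ ∃ a b, ∀ y, F y = a ∨ F y = b) := by
  let m : ℕ → Fin 2 → Fin 2 → ℝ := fun n => ((g n : Matrix (Fin 2) (Fin 2) ℝ) : Fin 2 → Fin 2 → ℝ)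
  have hm0 : ∀ n, m n ≠ 0 := fun n h => by
    have h1 : (g n : Matrix (Fin 2) (Fin 2) ℝ) = 0 := h
    exact (g n).ne_zero h1
  let N : ℕ → Fin 2 → Fin 2 → ℝ := fun n => ‖m n‖⁻¹ • m n
  have hN : ∀ n, N n ∈ Metric.sphere (0 : Fin 2 → Fin 2 → ℝ) 1 := fun n => by
    simp [N, norm_smul, hm0 n]
  obtain ⟨M, hM, s, hs, hlim⟩ := (isCompact_sphere (0 : Fin 2 → Fin 2 → ℝ) 1).tendsto_subseq hN
  have hM0 : M ≠ 0 := ne_zero_of_mem_unit_sphere ⟨M, hM⟩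
  have hact : ∀ (n : ℕ) (v : Fin 2 → ℝ) (hv : v ≠ 0),
      ∃ hv' : (Matrix.of (N n)).mulVec v ≠ 0, projAction (g n) (Projectivization.mk ℝ v hv) =
        Projectivization.mk ℝ ((Matrix.of (N n)).mulVec v) hv' := fun n v hv => by
    have h1 : (Matrix.of (N n)).mulVec v =
        ‖m n‖⁻¹ • (g n : Matrix (Fin 2) (Fin 2) ℝ).mulVec v := 
      Matrix.smul_mulVec ‖m n‖⁻¹ (g n : Matrix (Fin 2) (Fin 2) ℝ) v
    have h2 : ‖m n‖⁻¹ ≠ 0 := by simpa using hm0 n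
    refine ⟨?_, ?_⟩
    · rw [h1]
      exact smul_ne_zero h2 (gl_mulVec_ne_zero _ hv)
    · rw [projAction_mk, Eq.comm, Projectivization.mk_eq_mk_iff']
      exact ⟨_, h1.symm⟩
  have hgen : ∀ (v : Fin 2 → ℝ) (hv : v ≠ 0) (hMv : (Matrix.of M).mulVec v ≠ 0),
      Tendsto (fun n => projAction (g (s n)) (Projectivization.mk ℝ v hv)) atTop
        (𝓝 (Projectivization.mk ℝ ((Matrix.of M).mulVec v) hMv)) := fun v hv hMv => by
    have h1 : ∀ n, projAction (g (s n)) (Projectivization.mk ℝ v hv) = _ := fun n =>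
      (hact (s n) v hv).choose_spec
    simp_rw [h1]
    refine tendsto_projMk _ _ ?_
    have hc : Continuous fun K : Fin 2 → Fin 2 → ℝ => (Matrix.of K).mulVec v := by
      refine continuous_pi fun i => ?_
      simp only [Matrix.mulVec, dotProduct, Matrix.of_apply]
      fun_prop
    exact (hc.tendsto M).comp hlim
  by_cases hdet : (Matrix.of M).det = 0
  · obtain ⟨v₀, hv₀, hMv₀⟩ := Matrix.exists_mulVec_eq_zero_iff.2 hdet
    obtain ⟨u, hu⟩ : ∃ u, (Matrix.of M).mulVec u ≠ 0 := by
      by_contra! hc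
      refine hM0 ?_
      have : Matrix.of M = 0 := Matrix.ext_of_mulVec_single fun i => by
        rw [hc, Matrix.zero_mulVec]
      exact this
    have hker : ∀ v (hv : v ≠ 0), (Matrix.of M).mulVec v = 0 →
        Projectivization.mk ℝ v hv = Projectivization.mk ℝ v₀ hv₀ := fun v hv h => by
      obtain ⟨i, hi⟩ : ∃ i, M i ≠ 0 := by
        by_contra! hc
        exact hM0 (funext hc)
      refine projMk_eq_of_det_eq_zero _ _ ?_
      have e1 : M i 0 * v 0 + M i 1 * v 1 = 0 := by
        simpa [Matrix.mulVec, dotProduct] using congrFun h i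
      have e2 : M i 0 * v₀ 0 + M i 1 * v₀ 1 = 0 := by
        simpa [Matrix.mulVec, dotProduct] using congrFun hMv₀ i
      by_cases h0 : M i 0 = 0
      · have h1 : M i 1 ≠ 0 := fun h1 => hi (by ext j; fin_cases j <;> simpa)
        refine mul_left_cancel₀ h1 ?_
        linear_combination v 0 * e2 - v₀ 0 * e1
      · refine mul_left_cancel₀ h0 ?_
        linear_combination v₀ 1 * e1 - v 1 * e2
    have himage : ∀ v (hv : (Matrix.of M).mulVec v ≠ 0),
        Projectivization.mk ℝ _ hv = Projectivization.mk ℝ _ hu := fun v hv => by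
      refine projMk_eq_of_det_eq_zero _ _ ?_
      simp only [Matrix.det_fin_two, Matrix.of_apply] at hdet
      simp only [Matrix.mulVec, dotProduct, Fin.sum_univ_two, Matrix.of_apply]
      linear_combination (v 0 * u 1 - v 1 * u 0) * hdet
    obtain ⟨b, -, t, ht, hb⟩ := isCompact_univ.tendsto_subseq
      (x := fun n => projAction (g (s n)) (Projectivization.mk ℝ v₀ hv₀)) fun _ => Set.mem_univ _
    classical
    refine ⟨s ∘ t, fun y => if y = Projectivization.mk ℝ v₀ hv₀ then b else
      Projectivization.mk ℝ _ hu, hs.comp ht, fun y => ?_,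
      Measurable.ite (measurableSet_singleton _) measurable_const measurable_const,
      Or.inr ⟨b, Projectivization.mk ℝ _ hu, fun y => ?_⟩⟩
    · beta_reduce
      split_ifs with hy
      · subst hy
        exact hb
      · induction y using Projectivization.ind with | h v hv => ?_
        have hMv : (Matrix.of M).mulVec v ≠ 0 := fun h => hy (hker v hv h)
        rw [← himage v hMv]
        exact (hgen v hv hMv).comp ht.tendsto_atTop
    · beta_reduce
      split_ifs <;> simp
  · let h := Matrix.GeneralLinearGroup.mkOfDetNeZero _ hdet
    refine ⟨s, projAction h, hs, fun y => ?_, (continuous_projAction_right h).measurable,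
      Or.inl ⟨h, rfl⟩⟩
    induction y using Projectivization.ind with | h v hv => ?_
    exact hgen v hv (gl_mulVec_ne_zero h hv)

/-- `w` is a limit of translates of the tuple of measures `z`. -/
def IsOrbitLimit {ι : Type*} (z w : ι → Measure (Proj 2)) : Prop :=
  ∃ g : ℕ → GL (Fin 2) ℝ, ∀ k, ∀ φ : C(Proj 2, ℝ),
    Tendsto (fun n => ∫ y, φ (projAction (g n) y) ∂(z k)) atTop (𝓝 (∫ y, φ y ∂(w k)))

lemma measure_ext_of_forall_integral_eq {ν₁ ν₂ : Measure (Proj 2)} [IsFiniteMeasure ν₁]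
    [IsFiniteMeasure ν₂] (h : ∀ φ : C(Proj 2, ℝ), ∫ y, φ y ∂ν₁ = ∫ y, φ y ∂ν₂) : ν₁ = ν₂ :=
  ext_of_forall_integral_eq_of_IsFiniteMeasure fun φ => h φ.toContinuousMap

lemma tendsto_integral_of_tendsto_pointwise (ν : Measure (Proj 2)) [IsFiniteMeasure ν]
    (φ : C(Proj 2, ℝ)) {G : ℕ → Proj 2 → Proj 2} {F : Proj 2 → Proj 2}
    (hG : ∀ n, Measurable (G n)) (h : ∀ y, Tendsto (fun n => G n y) atTop (𝓝 (F y))) :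
    Tendsto (fun n => ∫ y, φ (G n y) ∂ν) atTop (𝓝 (∫ y, φ (F y) ∂ν)) := by
  refine tendsto_integral_of_dominated_convergence (fun _ => ‖φ‖) (fun n => ?_)
    (integrable_const _) (fun n => ae_of_all _ fun y => φ.norm_coe_le_norm _)
    (ae_of_all _ fun y => (φ.continuous.tendsto _).comp (h y))
  exact (φ.continuous.measurable.comp (hG n)).aestronglyMeasurable

lemma IsOrbitLimit.exists_map_eq {ι : Type*} {z w : ι → Measure (Proj 2)}
    [∀ k, IsProbabilityMeasure (z k)] [∀ k, IsProbabilityMeasure (w k)] (h : IsOrbitLimit z w) :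
    ∃ F : Proj 2 → Proj 2, Measurable F ∧ (∀ k, w k = (z k).map F) ∧
      ((∃ h : GL (Fin 2) ℝ, F = projAction h) ∨ ∃ a b, ∀ y, F y = a ∨ F y = b) := by
  obtain ⟨g, hg⟩ := h
  obtain ⟨s, F, hs, hF, hFm, hF'⟩ := exists_subseq_tendsto_projAction g
  refine ⟨F, hFm, fun k => ?_, hF'⟩
  have : IsProbabilityMeasure ((z k).map F) := Measure.isProbabilityMeasure_map hFm.aemeasurable
  refine measure_ext_of_forall_integral_eq fun φ => ?_
  rw [integral_map hFm.aemeasurable φ.continuous.measurable.aestronglyMeasurable]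
  exact tendsto_nhds_unique ((hg k φ).comp hs.tendsto_atTop)
    (tendsto_integral_of_tendsto_pointwise _ φ
      (fun n => (continuous_projAction_right _).measurable) hF)

lemma exists_gl_map_eq_of_factor {ι : Type*} {z w : ι → Measure (Proj 2)}
    [∀ k, IsProbabilityMeasure (z k)]
    {F H : Proj 2 → Proj 2} (hH : Measurable H)
    (hw : ∀ k, w k = (z k).map F) (hz : ∀ k, z k = (w k).map H) {a b : Proj 2}
    (hab : ∀ y, H y = a ∨ H y = b) :
    ∃ g : GL (Fin 2) ℝ, ∀ k, (z k).map (projAction g) = w k := by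
  have hsupp : ∀ k, ∀ᵐ y ∂(z k), y = a ∨ y = b := fun k => by
    rw [hz k]
    exact (ae_map_iff hH.aemeasurable
      ((measurableSet_singleton a).union (measurableSet_singleton b))).2 (ae_of_all _ hab)
  by_cases hFab : F a = F b
  · have hw' : ∀ k, w k = Measure.dirac (F a) := fun k => by
      have : F =ᵐ[z k] fun _ => F a := by
        filter_upwards [hsupp k] with y hy
        rcases hy with rfl | rfl
        · rfl
        · exact hFab.symm
      rw [hw k, Measure.map_congr this, Measure.map_const, measure_univ, one_smul]
    have hz' : ∀ k, z k = Measure.dirac (H (F a)) := fun k => by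
      rw [hz k, hw' k, Measure.map_dirac' hH]
    obtain ⟨g, hg⟩ := exists_gl_transitive (H (F a)) (F a)
    refine ⟨g, fun k => ?_⟩
    rw [hz' k, hw' k, Measure.map_dirac' (continuous_projAction_right g).measurable, hg]
  · obtain ⟨g, hga, hgb⟩ := exists_gl_two_transitive (fun h => hFab (congrArg F h)) hFab
    refine ⟨g, fun k => ?_⟩
    rw [hw k]
    refine Measure.map_congr ?_
    filter_upwards [hsupp k] with y hy
    rcases hy with rfl | rfl
    · exact hga
    · exact hgb

/-- Orbits of `GL(2,ℝ)` on tuples of measures on the projective line are separated by their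
closures. -/
lemma IsOrbitLimit.exists_gl_map_eq {ι : Type*} {z w : ι → Measure (Proj 2)}
    [∀ k, IsProbabilityMeasure (z k)] [∀ k, IsProbabilityMeasure (w k)] (h : IsOrbitLimit z w)
    (h' : IsOrbitLimit w z) :
    ∃ g : GL (Fin 2) ℝ, ∀ k, (z k).map (projAction g) = w k := by
  obtain ⟨F, -, hw, -⟩ := h.exists_map_eq
  obtain ⟨H, hH, hz, ⟨g, rfl⟩ | ⟨a, b, hab⟩⟩ := h'.exists_map_eq
  · refine ⟨g⁻¹, fun k => ?_⟩
    rw [hz k, Measure.map_map (continuous_projAction_right _).measurable hH]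
    have : projAction g⁻¹ ∘ projAction g = id := by
      funext y
      exact projAction_inv_of_eq rfl
    rw [this, Measure.map_id]
  · exact exists_gl_map_eq_of_factor hH hw hz hab

/-- The minimum of a continuous function over the fibres of a continuous map on a compact set is
measurable and attained. -/
lemma exists_measurable_fiber_min {E Z : Type*} [TopologicalSpace E] [TopologicalSpace Z]
    [T2Space Z] [MeasurableSpace Z] [OpensMeasurableSpace Z] {K : Set E} (hK : IsCompact K)
    {Ψ : E → Z} (hΨ : Continuous Ψ) {h : E → ℝ} (hh : Continuous h) :
    ∃ a : Z → ℝ, Measurable a ∧ ∀ z ∈ Ψ '' K, ∃ e ∈ K, Ψ e = z ∧ h e = a z := by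
  have hcpt : ∀ z, IsCompact (K ∩ Ψ ⁻¹' {z}) := fun z =>
    hK.inter_right (isClosed_singleton.preimage hΨ)
  have hatt : ∀ z ∈ Ψ '' K, ∃ e ∈ K, Ψ e = z ∧ h e = sInf (h '' (K ∩ Ψ ⁻¹' {z})) := by
    rintro z ⟨e, he, hez⟩
    obtain ⟨e', ⟨he', hz'⟩, h'⟩ := (hcpt z).exists_sInf_image_eq ⟨e, he, hez⟩ hh.continuousOn
    exact ⟨e', he', hz', h'.symm⟩
  refine ⟨fun z => sInf (h '' (K ∩ Ψ ⁻¹' {z})), measurable_of_Iic fun t => ?_, hatt⟩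
  have : (fun z => sInf (h '' (K ∩ Ψ ⁻¹' {z}))) ⁻¹' Set.Iic t =
      Ψ '' (K ∩ h ⁻¹' Set.Iic t) ∪ ((Ψ '' K)ᶜ ∩ {_z | (0 : ℝ) ≤ t}) := by
    ext z
    by_cases hz : z ∈ Ψ '' K
    · simp only [Set.mem_preimage, Set.mem_Iic, Set.mem_union, Set.mem_inter_iff,
        Set.mem_compl_iff, hz, not_true, false_and, or_false]
      constructor
      · intro hle
        obtain ⟨e, he, hez, heq⟩ := hatt z hz
        exact ⟨e, ⟨he, heq.trans_le hle⟩, hez⟩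
      · rintro ⟨e, ⟨he, hle⟩, hez⟩
        exact (csInf_le ((hcpt z).bddBelow_image hh.continuousOn) ⟨e, ⟨he, hez⟩, rfl⟩).trans hle
    · have hempty : K ∩ Ψ ⁻¹' {z} = ∅ := by
        ext e
        simp only [Set.mem_inter_iff, Set.mem_preimage, Set.mem_singleton_iff,
          Set.mem_empty_iff_false, iff_false, not_and]
        exact fun he hez => hz ⟨e, he, hez⟩
      have hz' : z ∉ Ψ '' (K ∩ h ⁻¹' Set.Iic t) := fun hz' =>
        hz (Set.image_mono Set.inter_subset_left hz')
      simp [hempty, hz, hz']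
  rw [this]
  exact (((hK.inter_right (isClosed_Iic.preimage hh)).image hΨ).isClosed.measurableSet).union
    ((hK.image hΨ).isClosed.measurableSet.compl.inter (MeasurableSet.const _))

/-- The fibres of a continuous map on a compact set have points whose coordinates, for finitely
many continuous real functions, depend measurably on the fibre. -/
lemma exists_measurable_fiber_coords {E Z : Type*} [TopologicalSpace E] [TopologicalSpace Z]
    [T2Space Z] [SecondCountableTopology Z] [MeasurableSpace Z] [OpensMeasurableSpace Z]
    {K : Set E} (hK : IsCompact K) {Ψ : E → Z} (hΨ : Continuous Ψ) (n : ℕ) (h : Fin n → E → ℝ)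
    (hh : ∀ i, Continuous (h i)) :
    ∃ a : Z → Fin n → ℝ, Measurable a ∧
      ∀ z ∈ Ψ '' K, ∃ e ∈ K, Ψ e = z ∧ ∀ i, h i e = a z i := by
  induction n with
  | zero =>
    refine ⟨fun _ => Fin.elim0, measurable_const, ?_⟩
    rintro z ⟨e, he, hez⟩
    exact ⟨e, he, hez, fun i => i.elim0⟩
  | succ n ih =>
    obtain ⟨a, ha, ha'⟩ := ih (fun i => h i.castSucc) fun i => hh _
    obtain ⟨b, hb, hb'⟩ := exists_measurable_fiber_min hK
      (Ψ := fun e => (Ψ e, fun i : Fin n => h i.castSucc e))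
      (hΨ.prodMk (continuous_pi fun i => hh _)) (hh (Fin.last n))
    refine ⟨fun z => Fin.snoc (α := fun _ => ℝ) (a z) (b (z, a z)), ?_, fun z hz => ?_⟩
    · refine measurable_pi_lambda _ fun i => ?_
      refine Fin.lastCases ?_ (fun i => ?_) i
      · simpa only [Fin.snoc_last] using
          show Measurable fun z => b (z, a z) from hb.comp (measurable_id.prodMk ha)
      · simpa only [Fin.snoc_castSucc] using
          show Measurable fun z => a z i from (measurable_pi_apply i).comp ha
    · obtain ⟨e, he, hez, hei⟩ := ha' z hz
      obtain ⟨e', he', hez', hei'⟩ := hb' (z, a z) ⟨e, he, Prod.ext hez (funext hei)⟩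
      refine ⟨e', he', congrArg Prod.fst hez', fun i => ?_⟩
      refine Fin.lastCases ?_ (fun i => ?_) i
      · simpa using hei'
      · simpa using congrFun (congrArg Prod.snd hez') i

instance glSigmaCompactSpace (d : ℕ) : SigmaCompactSpace (GL (Fin d) ℝ) := by
  have : SigmaCompactSpace (Matrix (Fin d) (Fin d) ℝ) :=
    inferInstanceAs (SigmaCompactSpace (Fin d → Fin d → ℝ))
  have : SigmaCompactSpace (Matrix (Fin d) (Fin d) ℝ)ᵐᵒᵖ :=
    MulOpposite.opHomeomorph.symm.isClosedEmbedding.sigmaCompactSpace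
  exact Units.isClosedEmbedding_embedProduct.sigmaCompactSpace

instance glSecondCountableTopology (d : ℕ) : SecondCountableTopology (GL (Fin d) ℝ) := by
  have : SecondCountableTopology (Matrix (Fin d) (Fin d) ℝ) :=
    inferInstanceAs (SecondCountableTopology (Fin d → Fin d → ℝ))
  have : SecondCountableTopology (Matrix (Fin d) (Fin d) ℝ)ᵐᵒᵖ :=
    MulOpposite.opHomeomorph.symm.isEmbedding.secondCountableTopology
  exact Units.isEmbedding_embedProduct.secondCountableTopology

/-- A continuous map on `GL(d,ℝ)` has a measurable section. -/
lemma exists_measurable_gl_section {d : ℕ} {Z : Type*} [TopologicalSpace Z]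
    [T2Space Z] [SecondCountableTopology Z] [MeasurableSpace Z] [OpensMeasurableSpace Z]
    {Ψ : GL (Fin d) ℝ → Z} (hΨ : Continuous Ψ) :
    ∃ P : Z → GL (Fin d) ℝ, Measurable (fun z => (P z : Matrix (Fin d) (Fin d) ℝ)) ∧
      ∀ z ∈ Set.range Ψ, Ψ (P z) = z := by
  choose a ha ha' using fun n => exists_measurable_fiber_coords
    (isCompact_compactCovering (GL (Fin d) ℝ) n) hΨ (d * d)
    (fun i g => (g : Matrix (Fin d) (Fin d) ℝ) (finProdFinEquiv.symm i).1 (finProdFinEquiv.symm i).2)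
    (fun i => by fun_prop)
  let S : ℕ → Set Z := fun n => Ψ '' compactCovering (GL (Fin d) ℝ) n
  have hS : ∀ n, MeasurableSet (S n) := fun n =>
    ((isCompact_compactCovering _ n).image hΨ).isClosed.measurableSet
  obtain ⟨b, hb, hb'⟩ := exists_measurable_piecewise (disjointed S)
    (fun n => MeasurableSet.disjointed hS n) a ha fun i j hij z hz =>
      ((disjoint_disjointed S hij).le_bot hz).elim
  let M : Z → Matrix (Fin d) (Fin d) ℝ := fun z => Matrix.of fun i j => b z (finProdFinEquiv (i, j))
  have hM : Measurable M := measurable_pi_lambda _ fun i => measurable_pi_lambda _ fun j =>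
    (measurable_pi_apply (finProdFinEquiv (i, j))).comp hb
  have hMdet : Measurable fun z => (M z).det := by
    have hc : Continuous fun K : Fin d → Fin d → ℝ => (Matrix.of K).det :=
      Continuous.matrix_det (A := fun K : Fin d → Fin d → ℝ => Matrix.of K) continuous_id
    exact hc.measurable.comp hM
  classical
  refine ⟨fun z => if hz : (M z).det ≠ 0 then Matrix.GeneralLinearGroup.mkOfDetNeZero _ hz else 1,
    ?_, ?_⟩
  · have : (fun z => ((if hz : (M z).det ≠ 0 then Matrix.GeneralLinearGroup.mkOfDetNeZero _ hz
        else 1 : GL (Fin d) ℝ) : Matrix (Fin d) (Fin d) ℝ)) =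
        fun z => if (M z).det ≠ 0 then M z else 1 := by
      funext z
      split_ifs <;> rfl
    rw [this]
    exact Measurable.ite (hMdet (measurableSet_singleton 0).compl) hM measurable_const
  · rintro z ⟨g, rfl⟩
    obtain ⟨n, hn⟩ : ∃ n, Ψ g ∈ disjointed S n := by
      rw [← Set.mem_iUnion, iUnion_disjointed, Set.mem_iUnion]
      obtain ⟨n, hn⟩ := exists_mem_compactCovering g
      exact ⟨n, g, hn, rfl⟩
    obtain ⟨e, -, he, hei⟩ := ha' n _ (disjointed_subset S n hn)
    have hMe : M (Ψ g) = (e : Matrix (Fin d) (Fin d) ℝ) := by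
      ext i j
      simpa [M, hb' n hn] using (hei (finProdFinEquiv (i, j))).symm
    have hdet : (M (Ψ g)).det ≠ 0 := by
      rw [hMe]
      exact e.isUnit.map Matrix.detMonoidHom |>.ne_zero
    beta_reduce
    rw [dif_pos hdet]
    have : Matrix.GeneralLinearGroup.mkOfDetNeZero _ hdet = e := Units.ext hMe
    rw [this, he]

lemma IsBernoulli.map_eval_zero {Y : Type*} [MeasurableSpace Y] {p : Measure Y}
    {Pr : Measure (ℤ → Y)} (hPr : IsBernoulli p Pr) : Pr.map (fun ω => ω 0) = p := by
  ext s hs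
  rw [Measure.map_apply (measurable_pi_apply 0) hs]
  have h : Pr {ω | ω 0 ∈ s} = p s := by simpa using hPr {0} (fun _ => s) fun _ _ => hs
  exact h

/-- Ergodicity of the skew product: subsets of `X` invariant under almost every map are trivial. -/
lemma ae_mem_or_ae_notMem_of_ergodic {X Y : Type*} [MeasurableSpace X] {μ : Measure X}
    [IsProbabilityMeasure μ] [MeasurableSpace Y] {p : Measure Y}
    {Pr : Measure (ℤ → Y)} [IsProbabilityMeasure Pr] (hPr : IsBernoulli p Pr)
    {f : Y → X → X} (hf : Measurable fun q : Y × X => f q.1 q.2)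
    (herg : Ergodic (fbar f) (Pr.prod μ)) {E : Set X} (hE : MeasurableSet E)
    (hinv : ∀ᵐ i ∂p, ∀ᵐ x ∂μ, f i x ∈ E ↔ x ∈ E) :
    (∀ᵐ x ∂μ, x ∈ E) ∨ ∀ᵐ x ∂μ, x ∉ E := by
  have hev : Measurable fun ω : ℤ → Y => ω 0 := measurable_pi_apply 0
  have hinv' : ∀ᵐ ω ∂Pr, ∀ᵐ x ∂μ, f (ω 0) x ∈ E ↔ x ∈ E := by
    rw [← hPr.map_eval_zero] at hinv
    exact ae_of_ae_map hev.aemeasurable hinv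
  have hfm : Measurable fun q : (ℤ → Y) × X => f (q.1 0) q.2 :=
    hf.comp (f := fun q : (ℤ → Y) × X => (q.1 0, q.2))
      ((hev.comp measurable_fst).prodMk measurable_snd)
  have hprod : ∀ᵐ q ∂(Pr.prod μ), f (q.1 0) q.2 ∈ E ↔ q.2 ∈ E := by
    refine (Measure.ae_prod_iff_ae_ae ?_).2 hinv'
    exact (hfm hE).iff (measurable_snd hE)
  have hpre : fbar f ⁻¹' (Prod.snd ⁻¹' E) =ᵐ[Pr.prod μ] Prod.snd ⁻¹' E := by
    filter_upwards [hprod] with q hq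
    exact propext hq
  have hsnd : ∀ s : Set X, (∀ᵐ q ∂(Pr.prod μ), q.2 ∈ s) → ∀ᵐ x ∂μ, x ∈ s := fun s hs => by
    obtain ⟨ω, hω⟩ := (Measure.ae_ae_of_ae_prod hs).exists
    exact hω
  rcases herg.quasiErgodic.ae_empty_or_univ₀ (measurable_snd hE).nullMeasurableSet hpre with h | h
  · right
    refine hsnd Eᶜ ?_
    filter_upwards [h] with q hq h'
    exact (iff_of_eq hq).1 h'
  · left
    refine hsnd E ?_
    filter_upwards [h] with q hq
    exact (iff_of_eq hq).2 trivial

/-- A dense sequence of continuous functions on the projective line. -/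
noncomputable def testFun : ℕ → C(Proj 2, ℝ) :=
  TopologicalSpace.denseSeq _

lemma dist_integral_le (ν : Measure (Proj 2)) [IsProbabilityMeasure ν] (φ ψ : C(Proj 2, ℝ)) :
    dist (∫ y, φ y ∂ν) (∫ y, ψ y ∂ν) ≤ dist φ ψ := by
  have hi : ∀ φ : C(Proj 2, ℝ), Integrable φ ν := fun φ =>
    Integrable.of_bound φ.continuous.measurable.aestronglyMeasurable ‖φ‖
      (ae_of_all _ φ.norm_coe_le_norm)
  rw [Real.dist_eq, ← integral_sub (hi φ) (hi ψ), ← Real.norm_eq_abs]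
  refine (norm_integral_le_of_norm_le_const (C := dist φ ψ) (ae_of_all _ fun y => ?_)).trans ?_
  · rw [← dist_eq_norm]
    exact ContinuousMap.dist_apply_le_dist y
  · simp

lemma tendsto_integral_of_tendsto_testFun {η : ℕ → Measure (Proj 2)} {ν : Measure (Proj 2)}
    [∀ n, IsProbabilityMeasure (η n)] [IsProbabilityMeasure ν]
    (h : ∀ j, Tendsto (fun n => ∫ y, testFun j y ∂(η n)) atTop (𝓝 (∫ y, testFun j y ∂ν)))
    (φ : C(Proj 2, ℝ)) : Tendsto (fun n => ∫ y, φ y ∂(η n)) atTop (𝓝 (∫ y, φ y ∂ν)) := by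
  rw [Metric.tendsto_atTop]
  intro ε hε
  obtain ⟨j, hj⟩ := (TopologicalSpace.denseRange_denseSeq C(Proj 2, ℝ)).exists_dist_lt φ
    (show 0 < ε / 3 by positivity)
  obtain ⟨N, hN⟩ := Metric.tendsto_atTop.1 (h j) (ε / 3) (by positivity)
  refine ⟨N, fun n hn => ?_⟩
  have h1 := dist_integral_le (η n) φ (testFun j)
  have h2 := dist_integral_le ν (testFun j) φ
  have h3 := hN n hn
  have h4 := dist_triangle4 (∫ y, φ y ∂(η n)) (∫ y, testFun j y ∂(η n)) (∫ y, testFun j y ∂ν)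
    (∫ y, φ y ∂ν)
  have hj' : dist φ (testFun j) < ε / 3 := hj
  rw [dist_comm (testFun j) φ] at h2
  linarith

/-- The integrals of the test functions against the translates of a sequence of measures. -/
noncomputable def moments (z : ℕ → Measure (Proj 2)) (g : GL (Fin 2) ℝ) : ℕ → ℕ → ℝ :=
  fun k j => ∫ y, testFun j (projAction g y) ∂(z k)

lemma integral_map_projAction (ν : Measure (Proj 2)) (g : GL (Fin 2) ℝ) (φ : C(Proj 2, ℝ)) :
    ∫ y, φ y ∂(ν.map (projAction g)) = ∫ y, φ (projAction g y) ∂ν :=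
  integral_map (continuous_projAction_right g).measurable.aemeasurable
    φ.continuous.measurable.aestronglyMeasurable

lemma moments_map (z : ℕ → Measure (Proj 2)) (g h : GL (Fin 2) ℝ) :
    moments (fun k => (z k).map (projAction h)) g = moments z (g * h) := by
  funext k j
  simp only [moments, projAction_mul]
  exact integral_map_projAction (z k) h ((testFun j).comp ⟨_, continuous_projAction_right g⟩)

lemma continuous_moments (z : ℕ → Measure (Proj 2)) [∀ k, IsProbabilityMeasure (z k)] :
    Continuous (moments z) := by
  refine continuous_pi fun k => continuous_pi fun j => ?_
  refine continuous_of_dominated (bound := fun _ => ‖testFun j‖) (fun g => ?_)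
    (fun g => ae_of_all _ fun y => (testFun j).norm_coe_le_norm _) (integrable_const _)
    (ae_of_all _ fun y => (testFun j).continuous.comp (continuous_projAction_left y))
  exact ((testFun j).continuous.comp
    (continuous_projAction_right g)).measurable.aestronglyMeasurable

lemma measurable_moments {X : Type*} [MeasurableSpace X] (κ : ℕ → Kernel X (Proj 2))
    (g : GL (Fin 2) ℝ) :
    Measurable fun x => moments (fun k => κ k x) g := by
  refine measurable_pi_lambda _ fun k => measurable_pi_lambda _ fun j => ?_
  have : StronglyMeasurable fun y => testFun j (projAction g y) :=
    ((testFun j).continuous.comp (continuous_projAction_right g)).measurable.stronglyMeasurable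
  exact (this.integral_kernel (κ := κ k)).measurable

lemma isOrbitLimit_of_mem_closure {z w : ℕ → Measure (Proj 2)} [∀ k, IsProbabilityMeasure (z k)]
    [∀ k, IsProbabilityMeasure (w k)] (h : moments w 1 ∈ closure (Set.range (moments z))) :
    IsOrbitLimit z w := by
  obtain ⟨u, hu, hlim⟩ := mem_closure_iff_seq_limit.1 h
  choose g hg using hu
  refine ⟨g, fun k φ => ?_⟩
  have : ∀ n, IsProbabilityMeasure ((z k).map (projAction (g n))) := fun n =>
    Measure.isProbabilityMeasure_map (continuous_projAction_right _).measurable.aemeasurable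
  simp_rw [← integral_map_projAction]
  refine tendsto_integral_of_tendsto_testFun (fun j => ?_) φ
  simp_rw [integral_map_projAction]
  have h1 := (tendsto_pi_nhds.1 ((tendsto_pi_nhds.1 hlim) k)) j
  simpa [← hg, moments] using h1

/-- A kernel of measures on the projective line is equivariant under a random cocycle. -/
def IsEquivariant {X Y : Type*} [MeasurableSpace X] (μ : Measure X) [MeasurableSpace Y]
    (p : Measure Y) (f : Y → X → X) (A : Y → X → GL (Fin 2) ℝ) (κ : Kernel X (Proj 2)) : Prop :=
  ∀ᵐ i ∂p, ∀ᵐ x ∂μ, κ (f i x) = (κ x).map (projAction (A i x))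

/-- The values of a sequence of equivariant kernels lie almost surely in a single orbit. -/
lemma exists_ae_mem_orbit {X Y : Type*} [MeasurableSpace X] {μ : Measure X}
    [IsProbabilityMeasure μ] [MeasurableSpace Y] {p : Measure Y}
    {Pr : Measure (ℤ → Y)} [IsProbabilityMeasure Pr] (hPr : IsBernoulli p Pr)
    {f : Y → X → X} (hf : Measurable fun q : Y × X => f q.1 q.2)
    (herg : Ergodic (fbar f) (Pr.prod μ)) {A : Y → X → GL (Fin 2) ℝ}
    (κ : ℕ → Kernel X (Proj 2)) [∀ k, IsMarkovKernel (κ k)]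
    (hκ : ∀ k, IsEquivariant μ p f A (κ k)) :
    ∃ x₀, ∀ᵐ x ∂μ, ∃ g : GL (Fin 2) ℝ, ∀ k, (κ k x₀).map (projAction g) = κ k x := by
  let E : Set (ℕ → ℕ → ℝ) → Set X := fun W => {x | ∃ g, moments (fun k => κ k x) g ∈ W}
  have hEm : ∀ W, IsOpen W → MeasurableSet (E W) := fun W hW => by
    have : E W = ⋃ n, (fun x => moments (fun k => κ k x)
        (TopologicalSpace.denseSeq (GL (Fin 2) ℝ) n)) ⁻¹' W := by
      ext x
      simp only [E, Set.mem_ofPred_eq, Set.mem_iUnion, Set.mem_preimage]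
      refine ⟨fun ⟨g, hg⟩ => ?_, fun ⟨n, hn⟩ => ⟨_, hn⟩⟩
      exact (TopologicalSpace.denseRange_denseSeq (GL (Fin 2) ℝ)).exists_mem_open
        (hW.preimage (continuous_moments fun k => κ k x)) ⟨g, hg⟩
    rw [this]
    exact MeasurableSet.iUnion fun n => measurable_moments κ _ hW.measurableSet
  have hEinv : ∀ W, ∀ᵐ i ∂p, ∀ᵐ x ∂μ, f i x ∈ E W ↔ x ∈ E W := fun W => by
    filter_upwards [ae_all_iff.2 hκ] with i hi
    filter_upwards [ae_all_iff.2 hi] with x hx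
    simp only [E, Set.mem_ofPred_eq, hx, moments_map]
    refine ⟨fun ⟨g, hg⟩ => ⟨_, hg⟩, fun ⟨g, hg⟩ => ⟨g * (A i x)⁻¹, ?_⟩⟩
    rwa [inv_mul_cancel_right]
  have hconst : ∀ W ∈ TopologicalSpace.countableBasis (ℕ → ℕ → ℝ),
      ∃ c : Prop, ∀ᵐ x ∂μ, x ∈ E W ↔ c := fun W hW => by
    rcases ae_mem_or_ae_notMem_of_ergodic hPr hf herg
      (hEm W (TopologicalSpace.isOpen_of_mem_countableBasis hW)) (hEinv W) with h | h
    · exact ⟨True, by simpa using h⟩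
    · exact ⟨False, by simpa using h⟩
  choose! c hc using hconst
  have hae : ∀ᵐ x ∂μ, ∀ W ∈ TopologicalSpace.countableBasis (ℕ → ℕ → ℝ), (x ∈ E W ↔ c W) :=
    (ae_ball_iff (TopologicalSpace.countable_countableBasis _)).2 hc
  have hclosure : ∀ x x' : X, (∀ W ∈ TopologicalSpace.countableBasis (ℕ → ℕ → ℝ),
      (x ∈ E W ↔ x' ∈ E W)) →
      moments (fun k => κ k x) 1 ∈ closure (Set.range (moments fun k => κ k x')) := by
    intro x x' h
    refine (TopologicalSpace.isBasis_countableBasis _).mem_closure_iff.2 fun W hW hxW => ?_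
    obtain ⟨g, hg⟩ := (h W hW).1 ⟨1, hxW⟩
    exact ⟨_, hg, g, rfl⟩
  obtain ⟨x₀, hx₀⟩ := hae.exists
  refine ⟨x₀, ?_⟩
  filter_upwards [hae] with x hx
  refine IsOrbitLimit.exists_gl_map_eq (isOrbitLimit_of_mem_closure (hclosure x x₀ fun W hW => ?_))
    (isOrbitLimit_of_mem_closure (hclosure x₀ x fun W hW => ?_))
  · rw [hx W hW, hx₀ W hW]
  · rw [hx W hW, hx₀ W hW]

/-- A family of sequences of uniformly bounded measurable functions contains a countable subfamily
which is dense for almost sure convergence along sequences. -/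
lemma exists_seq_forall_exists_ae_tendsto {X K : Type*} [MeasurableSpace X]
    [MeasurableSpace.CountablyGenerated X] (μ : Measure X) [IsFiniteMeasure μ] [Nonempty K]
    (u : K → X → ℕ → ℝ) (hu : ∀ k j, Measurable fun x => u k x j) {c : ℕ → ℝ}
    (hc : ∀ k x j, |u k x j| ≤ c j) :
    ∃ e : ℕ → K, ∀ k, ∃ s : ℕ → ℕ, ∀ᵐ x ∂μ, ∀ j,
      Tendsto (fun n => u (e (s n)) x j) atTop (𝓝 (u k x j)) := by
  let ρ : Measure ℕ := (Measure.count : Measure ℕ).toFinite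
  let U : K → X × ℕ → ℝ := fun k q => u k q.1 q.2 / (1 + |c q.2|)
  have hc0 : ∀ j, 0 < 1 + |c j| := fun j => by positivity
  have hUm : ∀ k, Measurable (U k) := fun k =>
    measurable_from_prod_countable_left fun j => (hu k j).div_const (1 + |c j|)
  have hUL : ∀ k, MemLp (U k) 1 (μ.prod ρ) := fun k => by
    refine MemLp.of_bound (hUm k).aestronglyMeasurable 1 (ae_of_all _ fun q => ?_)
    rw [Real.norm_eq_abs, abs_div, abs_of_pos (hc0 q.2), div_le_one (hc0 q.2)]
    linarith [hc k q.1 q.2, le_abs_self (c q.2)]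
  let T : K → Lp ℝ 1 (μ.prod ρ) := fun k => (hUL k).toLp
  have : Fact ((1 : ℝ≥0∞) ≠ ∞) := ⟨ENNReal.one_ne_top⟩
  let _ : TopologicalSpace K := TopologicalSpace.induced T inferInstance
  have hT : IsInducing T := ⟨rfl⟩
  have : SecondCountableTopology K := hT.secondCountableTopology
  refine ⟨TopologicalSpace.denseSeq K, fun k => ?_⟩
  have hk : k ∈ closure (Set.range (TopologicalSpace.denseSeq K)) :=
    TopologicalSpace.denseRange_denseSeq K k
  rw [hT.closure_eq_preimage_closure_image, Set.mem_preimage, mem_closure_iff_seq_limit] at hk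
  obtain ⟨v, hv, hlim⟩ := hk
  have hv' : ∀ n, ∃ m, T (TopologicalSpace.denseSeq K m) = v n := fun n => by
    obtain ⟨_, ⟨m, rfl⟩, h⟩ := hv n
    exact ⟨m, h⟩
  choose m hm using hv'
  obtain ⟨s, -, hs⟩ := (tendstoInMeasure_of_tendsto_Lp hlim).exists_seq_tendsto_ae
  refine ⟨m ∘ s, ?_⟩
  have h1 : ∀ᵐ q ∂(μ.prod ρ),
      Tendsto (fun n => U (TopologicalSpace.denseSeq K (m (s n))) q) atTop (𝓝 (U k q)) := by
    have h2 : ∀ᵐ q ∂(μ.prod ρ), ∀ k', T (TopologicalSpace.denseSeq K k') q =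
        U (TopologicalSpace.denseSeq K k') q := ae_all_iff.2 fun k' => (hUL _).coeFn_toLp
    filter_upwards [hs, h2, (hUL k).coeFn_toLp] with q hq h2 h3
    simp only [← hm, h2] at hq
    rwa [h3] at hq
  filter_upwards [Measure.ae_ae_of_ae_prod h1] with x hx j
  rw [ae_toFinite, Measure.ae_count_iff] at hx
  have h4 := (hx j).mul_const (1 + |c j|)
  simpa [U, (hc0 j).ne'] using h4

/-- A nonempty set of Markov kernels contains a sequence which is dense for almost sure weak
convergence along sequences. -/
lemma exists_seq_kernel_dense {X : Type*} [MeasurableSpace X]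
    [MeasurableSpace.CountablyGenerated X] (μ : Measure X) [IsFiniteMeasure μ]
    {S : Set (Kernel X (Proj 2))} (hS : S.Nonempty) (hM : ∀ κ ∈ S, IsMarkovKernel κ) :
    ∃ κ : ℕ → Kernel X (Proj 2), (∀ k, κ k ∈ S) ∧ ∀ η ∈ S, ∃ s : ℕ → ℕ, ∀ᵐ x ∂μ,
      ∀ φ : C(Proj 2, ℝ), Tendsto (fun n => ∫ y, φ y ∂(κ (s n) x)) atTop (𝓝 (∫ y, φ y ∂(η x))) := by
  have : Nonempty S := hS.to_subtype
  obtain ⟨e, he⟩ := exists_seq_forall_exists_ae_tendsto μ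
    (fun (κ : S) x j => ∫ y, testFun j y ∂(κ.1 x))
    (fun κ j => ((testFun j).continuous.measurable.stronglyMeasurable.integral_kernel
      (κ := κ.1)).measurable)
    (c := fun j => ‖testFun j‖) fun κ x j => by
      have := hM κ.1 κ.2
      refine (norm_integral_le_of_norm_le_const (C := ‖testFun j‖)
        (ae_of_all _ fun y => (testFun j).norm_coe_le_norm y)).trans ?_
      simp
  refine ⟨fun k => (e k).1, fun k => (e k).2, fun η hη => ?_⟩
  obtain ⟨s, hs⟩ := he ⟨η, hη⟩
  refine ⟨s, ?_⟩
  filter_upwards [hs] with x hx φ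
  have := hM η hη
  have := fun n => hM (e (s n)).1 (e (s n)).2
  exact tendsto_integral_of_tendsto_testFun hx φ

lemma exists_kernel_eq_map_projAction {X : Type*} [MeasurableSpace X] (κ : Kernel X (Proj 2))
    [IsMarkovKernel κ] {P : X → GL (Fin 2) ℝ}
    (hP : Measurable fun x => (P x : Matrix (Fin 2) (Fin 2) ℝ)) :
    ∃ η : Kernel X (Proj 2), IsMarkovKernel η ∧ ∀ x, η x = (κ x).map (projAction (P x)) := by
  have hm := measurable_projAction hP
  refine ⟨(Kernel.id ×ₖ κ).map fun q : X × Proj 2 => projAction (P q.1) q.2,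
    Kernel.IsMarkovKernel.map _ hm, fun x => ?_⟩
  rw [Kernel.map_apply _ hm, Kernel.prod_apply, Kernel.id_apply, Measure.dirac_prod,
    Measure.map_map hm measurable_prodMk_left]
  rfl

/-- The disintegration of an invariant measure of a skew product is equivariant. -/
lemma ae_eq_map_projAction_of_map_compProd_eq {X : Type*} [MeasurableSpace X]
    [StandardBorelSpace X] {μ : Measure X} [IsFiniteMeasure μ] {g : X → X}
    (hg : Function.Injective g) (hgm : MeasurePreserving g μ μ) {C : X → GL (Fin 2) ℝ}
    (hC : Measurable fun x => (C x : Matrix (Fin 2) (Fin 2) ℝ)) (κ : Kernel X (Proj 2))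
    [IsMarkovKernel κ]
    (h : (μ ⊗ₘ κ).map (fun q => (g q.1, projAction (C q.1) q.2)) = μ ⊗ₘ κ) :
    ∀ᵐ x ∂μ, κ (g x) = (κ x).map (projAction (C x)) := by
  obtain ⟨η, hη, hηκ⟩ := exists_kernel_eq_map_projAction κ hC
  have hge : MeasurableEmbedding g := hgm.measurable.measurableEmbedding hg
  have hG : MeasurableEmbedding (Prod.map g (id : Proj 2 → Proj 2)) :=
    hge.prodMap MeasurableEmbedding.id
  have hF : Measurable fun q : X × Proj 2 => (g q.1, projAction (C q.1) q.2) :=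
    (hgm.measurable.comp measurable_fst).prodMk (measurable_projAction hC)
  have h1 : (μ ⊗ₘ κ.comap g hgm.measurable).map (Prod.map g id) = μ ⊗ₘ κ := by
    ext s hs
    rw [Measure.map_apply hG.measurable hs, Measure.compProd_apply (hG.measurable hs),
      Measure.compProd_apply hs,
      ← hgm.lintegral_comp (Kernel.measurable_kernel_prodMk_left hs)]
    rfl
  have h2 : (μ ⊗ₘ η).map (Prod.map g id) = μ ⊗ₘ κ := by
    rw [← h]
    ext s hs
    rw [Measure.map_apply hG.measurable hs, Measure.compProd_apply (hG.measurable hs),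
      Measure.map_apply hF hs, Measure.compProd_apply (hF hs)]
    refine lintegral_congr fun x => ?_
    rw [hηκ x, Measure.map_apply (continuous_projAction_right _).measurable
      (measurable_prodMk_left (hG.measurable hs))]
    rfl
  have h3 : μ ⊗ₘ κ.comap g hgm.measurable = μ ⊗ₘ η := by
    rw [← hG.comap_map (μ ⊗ₘ κ.comap g hgm.measurable), h1, ← h2, hG.comap_map]
  filter_upwards [Kernel.ae_eq_of_compProd_eq h3] with x hx
  rw [← hηκ x, ← hx]
  rfl

/-- There is a measurable change of coordinates simultaneously straightening a sequence of
kernels taking values almost surely in a single orbit. -/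
lemma exists_measurable_straightening {X : Type*} [MeasurableSpace X] {μ : Measure X}
    (κ : ℕ → Kernel X (Proj 2)) [∀ k, IsMarkovKernel (κ k)] {x₀ : X}
    (h : ∀ᵐ x ∂μ, ∃ g : GL (Fin 2) ℝ, ∀ k, (κ k x₀).map (projAction g) = κ k x) :
    ∃ P : X → GL (Fin 2) ℝ, Measurable (fun x => (P x : Matrix (Fin 2) (Fin 2) ℝ)) ∧
      ∀ᵐ x ∂μ, ∀ k, (κ k x₀).map (projAction (P x)) = κ k x := by
  obtain ⟨S, hSm, hS⟩ := exists_measurable_gl_section (continuous_moments fun k => κ k x₀)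
  refine ⟨fun x => S (moments (fun k => κ k x) 1), hSm.comp (measurable_moments κ 1), ?_⟩
  filter_upwards [h] with x ⟨g, hg⟩ k
  have hmem : moments (fun k => κ k x) 1 ∈ Set.range (moments fun k => κ k x₀) := by
    refine ⟨g, ?_⟩
    rw [← funext hg, moments_map, one_mul]
  set P := S (moments (fun k => κ k x) 1)
  have hP : moments (fun k => κ k x₀) P = moments (fun k => κ k x) 1 := hS _ hmem
  have hprob : IsProbabilityMeasure ((κ k x₀).map (projAction P)) :=
    Measure.isProbabilityMeasure_map (continuous_projAction_right _).measurable.aemeasurable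
  refine measure_ext_of_forall_integral_eq fun φ => ?_
  refine tendsto_nhds_unique
    (tendsto_const_nhds : Tendsto (fun _ : ℕ => ∫ y, φ y ∂((κ k x₀).map (projAction P))) _ _)
    (tendsto_integral_of_tendsto_testFun (fun j => ?_) φ)
  rw [integral_map_projAction]
  have hj := congrFun (congrFun hP k) j
  simp only [moments, projAction_one] at hj
  rw [hj]
  exact tendsto_const_nhds

lemma map_projAction_map_projAction (ν : Measure (Proj 2)) (g h : GL (Fin 2) ℝ) :
    (ν.map (projAction h)).map (projAction g) = ν.map (projAction (g * h)) := by
  rw [Measure.map_map (continuous_projAction_right _).measurable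
    (continuous_projAction_right _).measurable]
  congr 1
  funext y
  exact (projAction_mul g h y).symm

/-- An almost sure weak limit of straightened kernels is straightened by the same coordinates. -/
lemma exists_ae_map_projAction_inv_eq {X : Type*} [MeasurableSpace X] {μ : Measure X}
    [IsProbabilityMeasure μ] {κ : ℕ → Kernel X (Proj 2)} [∀ k, IsMarkovKernel (κ k)]
    {z : ℕ → Measure (Proj 2)} {P : X → GL (Fin 2) ℝ}
    (hP : ∀ᵐ x ∂μ, ∀ k, (z k).map (projAction (P x)) = κ k x) (η : Kernel X (Proj 2))
    [IsMarkovKernel η] {s : ℕ → ℕ}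
    (hs : ∀ᵐ x ∂μ, ∀ φ : C(Proj 2, ℝ),
      Tendsto (fun n => ∫ y, φ y ∂(κ (s n) x)) atTop (𝓝 (∫ y, φ y ∂(η x)))) :
    ∃ ν : Measure (Proj 2), IsProbabilityMeasure ν ∧
      ∀ᵐ x ∂μ, (η x).map (projAction (P x)⁻¹) = ν := by
  obtain ⟨x₁, hP₁, hs₁⟩ := (hP.and hs).exists
  have hprob : ∀ x g, IsProbabilityMeasure ((η x).map (projAction g)) := fun x g =>
    Measure.isProbabilityMeasure_map (continuous_projAction_right _).measurable.aemeasurable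
  refine ⟨_, hprob x₁ (P x₁)⁻¹, ?_⟩
  filter_upwards [hP, hs] with x hPx hsx
  refine measure_ext_of_forall_integral_eq fun φ => ?_
  have hz : ∀ x', (∀ k, (z k).map (projAction (P x')) = κ k x') → ∀ k,
      ∫ y, φ (projAction (P x')⁻¹ y) ∂(κ k x') = ∫ y, φ y ∂(z k) := fun x' h k => by
    rw [← h k, ← integral_map_projAction, map_projAction_map_projAction, inv_mul_cancel,
      integral_map_projAction]
    simp
  have h1 := hsx (φ.comp ⟨_, continuous_projAction_right (P x)⁻¹⟩)
  have h2 := hs₁ (φ.comp ⟨_, continuous_projAction_right (P x₁)⁻¹⟩)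
  simp only [ContinuousMap.comp_apply, ContinuousMap.coe_mk, hz x hPx, hz x₁ hP₁] at h1 h2
  rw [integral_map_projAction, integral_map_projAction]
  exact tendsto_nhds_unique h1 h2

/-- An invariant measure of a cocycle, moved back by a change of coordinates, disintegrates into a
kernel equivariant under the original cocycle. -/
lemma exists_isEquivariant_of_invariant {X : Type*} [MeasurableSpace X] [StandardBorelSpace X]
    {μ : Measure X} [IsProbabilityMeasure μ] {Y : Type*} [MeasurableSpace Y] {p : Measure Y}
    {f : Y → X → X} {A : Y → X → GL (Fin 2) ℝ}
    (hfp : ∀ᵐ i ∂p, Function.Bijective (f i) ∧ MeasurePreserving (f i) μ μ)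
    (hA : Measurable fun q : Y × X => ((A q.1 q.2 : Matrix (Fin 2) (Fin 2) ℝ)))
    {P : X → GL (Fin 2) ℝ} (hP : Measurable fun x => (P x : Matrix (Fin 2) (Fin 2) ℝ))
    (κ : Kernel X (Proj 2)) [IsMarkovKernel κ]
    (hinv : ∀ᵐ i ∂p, (μ ⊗ₘ κ).map (fun q : X × Proj 2 =>
      (f i q.1, projAction ((P (f i q.1))⁻¹ * A i q.1 * P q.1) q.2)) = μ ⊗ₘ κ) :
    ∃ η : Kernel X (Proj 2), IsMarkovKernel η ∧ IsEquivariant μ p f A η ∧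
      ∀ x, (η x).map (projAction (P x)⁻¹) = κ x := by
  obtain ⟨η, hη, hηκ⟩ := exists_kernel_eq_map_projAction κ hP
  refine ⟨η, hη, ?_, fun x => ?_⟩
  · filter_upwards [hfp, hinv] with i hi hinv
    have hAi : Measurable fun x => (A i x : Matrix (Fin 2) (Fin 2) ℝ) :=
      hA.comp measurable_prodMk_left
    have hPi : Measurable fun x => (P (f i x) : Matrix (Fin 2) (Fin 2) ℝ) :=
      hP.comp hi.2.measurable
    filter_upwards [ae_eq_map_projAction_of_map_compProd_eq hi.1.injective hi.2
      (measurable_gl_mul (measurable_gl_mul (measurable_gl_inv hPi) hAi) hP) κ hinv] with x hx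
    rw [hηκ, hηκ, hx, map_projAction_map_projAction, map_projAction_map_projAction]
    congr 2
    group
  · rw [hηκ, map_projAction_map_projAction, inv_mul_cancel]
    simp [funext (projAction_one (d := 2))]

/-- An essentially unbounded random `GL(2,ℝ)`-valued cocycle is cohomologous
to a random cocycle all of whose invariant probability measures on `X × ℙ(ℝ²)` are product
measures. -/
theorem stmt7
    {X : Type*} [MeasurableSpace X] [StandardBorelSpace X]
    (μ : Measure X) [IsProbabilityMeasure μ]
    {Y : Type*} [MeasurableSpace Y] (p : Measure Y) [IsProbabilityMeasure p]
    (Pr : Measure (ℤ → Y)) [IsProbabilityMeasure Pr] (hPr : IsBernoulli p Pr)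
    (f : Y → X → X) (A : Y → X → GL (Fin 2) ℝ)
    (hf : Measurable fun q : Y × X => f q.1 q.2)
    (hfp : ∀ᵐ i ∂p, Function.Bijective (f i) ∧ MeasurePreserving (f i) μ μ)
    (hA : Measurable fun q : Y × X => ((A q.1 q.2 : Matrix (Fin 2) (Fin 2) ℝ)))
    (herg : Ergodic (fbar f) (Pr.prod μ))
    (hunb : ∀ᵐ q ∂(Pr.prod μ), ConvergesEssentiallyToInfinity fun n =>
        opNorm ((cocycleIter (fbar f) (Abar A) n q : GL (Fin 2) ℝ) :
          Matrix (Fin 2) (Fin 2) ℝ)) :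
    ∃ P : X → GL (Fin 2) ℝ,
      Measurable (fun x => ((P x : Matrix (Fin 2) (Fin 2) ℝ))) ∧
      ∀ μhat : Measure (X × Proj 2), IsProbabilityMeasure μhat →
        μhat.map Prod.fst = μ →
        (∀ᵐ i ∂p, μhat.map (fun q : X × Proj 2 =>
            (f i q.1, projAction ((P (f i q.1))⁻¹ * A i q.1 * P q.1) q.2)) = μhat) →
        ∃ ν : Measure (Proj 2), IsProbabilityMeasure ν ∧ μhat = μ.prod ν := by
  let S : Set (Kernel X (Proj 2)) := {κ | IsMarkovKernel κ ∧ IsEquivariant μ p f A κ}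
  suffices h : ∃ P : X → GL (Fin 2) ℝ,
      Measurable (fun x => ((P x : Matrix (Fin 2) (Fin 2) ℝ))) ∧
      ∀ η ∈ S, ∃ ν : Measure (Proj 2), IsProbabilityMeasure ν ∧
        ∀ᵐ x ∂μ, (η x).map (projAction (P x)⁻¹) = ν by
    obtain ⟨P, hP, h⟩ := h
    refine ⟨P, hP, fun μhat hμhat hfst hinv => ?_⟩
    have hdis : μ ⊗ₘ μhat.condKernel = μhat := by
      conv_rhs => rw [← μhat.disintegrate μhat.condKernel]
      rw [Measure.fst, hfst]
    obtain ⟨η, hη, hηe, hηκ⟩ := exists_isEquivariant_of_invariant hfp hA hP μhat.condKernel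
      (by rwa [hdis])
    obtain ⟨ν, hν, hνη⟩ := h η ⟨hη, hηe⟩
    refine ⟨ν, hν, ?_⟩
    rw [← hdis, ← Measure.compProd_const]
    refine Measure.compProd_congr ?_
    filter_upwards [hνη] with x hx
    rw [← hηκ, hx, Kernel.const_apply]
  by_cases hS : S.Nonempty
  · obtain ⟨κ, hκS, hκ⟩ := exists_seq_kernel_dense μ hS fun κ h => h.1
    have hκM : ∀ k, IsMarkovKernel (κ k) := fun k => (hκS k).1
    obtain ⟨x₀, hx₀⟩ := exists_ae_mem_orbit hPr hf herg κ fun k => (hκS k).2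
    obtain ⟨P, hPm, hP⟩ := exists_measurable_straightening κ hx₀
    refine ⟨P, hPm, fun η hη => ?_⟩
    obtain ⟨s, hs⟩ := hκ η hη
    have := hη.1
    exact exists_ae_map_projAction_inv_eq hP η hs
  · exact ⟨1, measurable_const, fun η hη => (hS ⟨η, hη⟩).elim⟩
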